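/- arXiv:math/0011145 — 2 statements merged into one kernel-verified Lean document; each statement's English description precedes it below -/
import Mathlib

section
/- For the rational limit R-matrix on ℂ^N ⊗ V evaluated in the vector representation V = U: R_{UU}(λ) = ∑_{a,b} E_{aa}⊗E_{bb} - ∑_{a<b} (E_{aa}⊗E_{bb})/λ_{ab}² - ∑_{a≠b} (E_{ab}⊗E_{ba})/λ_{ab} satisfies the dynamical Yang–Baxter equation R^{12}(λ-h^{(3)}) R^{13}(λ) R^{23}(λ-h^{(1)}) = R^{23}(λ) R^{13}(λ-h^{(2)}) R^{12}(λ) on (ℂ^N)^{⊗3}. -/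
/-- The rational limit R-matrix in the vector representation:
`R_{UU}(λ) = ∑_{a,b} E_{aa}⊗E_{bb} - ∑_{a<b} (E_{aa}⊗E_{bb})/λ_{ab}²
- ∑_{a≠b} (E_{ab}⊗E_{ba})/λ_{ab}`. -/
noncomputable def RUU (N : ℕ) (lam : Fin N → ℂ) :
    Matrix (Fin N × Fin N) (Fin N × Fin N) ℂ := fun p q =>
  (if p = q then 1 - (if p.1 < p.2 then 1 / (lam p.1 - lam p.2) ^ 2 else 0) else 0) -
    (if p.1 ≠ p.2 ∧ p.1 = q.2 ∧ p.2 = q.1 then 1 / (lam p.1 - lam p.2) else 0)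

/-- Weight of the `a`-th basis vector of the vector representation `ℂ^N`. -/
noncomputable def epsv (N : ℕ) (a : Fin N) : Fin N → ℂ := fun c => if c = a then 1 else 0

/-- `R^{12}(λ - sh(third factor))` on the triple tensor product. -/
noncomputable def R12op (N : ℕ) (lam : Fin N → ℂ) (sh : Fin N → Fin N → ℂ) :
    Matrix (Fin N × Fin N × Fin N) (Fin N × Fin N × Fin N) ℂ := fun p q =>
  if p.2.2 = q.2.2 then RUU N (fun c => lam c - sh p.2.2 c) (p.1, p.2.1) (q.1, q.2.1) else 0

/-- `R^{13}(λ - sh(second factor))`. -/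
noncomputable def R13op (N : ℕ) (lam : Fin N → ℂ) (sh : Fin N → Fin N → ℂ) :
    Matrix (Fin N × Fin N × Fin N) (Fin N × Fin N × Fin N) ℂ := fun p q =>
  if p.2.1 = q.2.1 then RUU N (fun c => lam c - sh p.2.1 c) (p.1, p.2.2) (q.1, q.2.2) else 0

/-- `R^{23}(λ - sh(first factor))`. -/
noncomputable def R23op (N : ℕ) (lam : Fin N → ℂ) (sh : Fin N → Fin N → ℂ) :
    Matrix (Fin N × Fin N × Fin N) (Fin N × Fin N × Fin N) ℂ := fun p q =>
  if p.1 = q.1 then RUU N (fun c => lam c - sh p.1 c) (p.2.1, p.2.2) (q.2.1, q.2.2) else 0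

noncomputable def dcoef {N : ℕ} (l : Fin N → ℂ) (a b : Fin N) : ℂ :=
  1 - (if a < b then 1 / (l a - l b) ^ 2 else 0)

noncomputable def gcoef {N : ℕ} (l : Fin N → ℂ) (a b : Fin N) : ℂ :=
  if a ≠ b then 1 / (l a - l b) else 0

lemma RUU_eq {N : ℕ} (l : Fin N → ℂ) (a b c d : Fin N) :
    RUU N l (a, b) (c, d) = (if c = a then if d = b then dcoef l a b else 0 else 0) -
      (if c = b then if d = a then gcoef l a b else 0 else 0) := by
  unfold RUU dcoef gcoef
  simp only [Prod.mk.injEq]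
  congr 1
  · split_ifs <;> simp_all
  · split_ifs <;> simp_all

lemma R12_mul {N : ℕ} (l : Fin N → ℂ) (sh : Fin N → Fin N → ℂ)
    (M : Matrix (Fin N × Fin N × Fin N) (Fin N × Fin N × Fin N) ℂ) (a b c : Fin N) (q) :
    (R12op N l sh * M) (a, b, c) q =
      dcoef (fun x => l x - sh c x) a b * M (a, b, c) q
      - gcoef (fun x => l x - sh c x) a b * M (b, a, c) q := by
  simp only [Matrix.mul_apply, R12op, RUU_eq, Fintype.sum_prod_type, sub_mul, ite_mul, zero_mul,
    Finset.sum_ite_eq, Finset.mem_univ, if_true, Finset.sum_sub_distrib, Finset.sum_ite_eq',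
    Finset.sum_ite_irrel, Finset.sum_const_zero]

lemma R13_mul {N : ℕ} (l : Fin N → ℂ) (sh : Fin N → Fin N → ℂ)
    (M : Matrix (Fin N × Fin N × Fin N) (Fin N × Fin N × Fin N) ℂ) (a b c : Fin N) (q) :
    (R13op N l sh * M) (a, b, c) q =
      dcoef (fun x => l x - sh b x) a c * M (a, b, c) q
      - gcoef (fun x => l x - sh b x) a c * M (c, b, a) q := by
  simp only [Matrix.mul_apply, R13op, RUU_eq, Fintype.sum_prod_type, sub_mul, ite_mul, zero_mul,
    Finset.sum_ite_eq, Finset.mem_univ, if_true, Finset.sum_sub_distrib, Finset.sum_ite_eq',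
    Finset.sum_ite_irrel, Finset.sum_const_zero]

lemma R23_mul {N : ℕ} (l : Fin N → ℂ) (sh : Fin N → Fin N → ℂ)
    (M : Matrix (Fin N × Fin N × Fin N) (Fin N × Fin N × Fin N) ℂ) (a b c : Fin N) (q) :
    (R23op N l sh * M) (a, b, c) q =
      dcoef (fun x => l x - sh a x) b c * M (a, b, c) q
      - gcoef (fun x => l x - sh a x) b c * M (a, c, b) q := by
  simp only [Matrix.mul_apply, R23op, RUU_eq, Fintype.sum_prod_type, sub_mul, ite_mul, zero_mul,
    Finset.sum_ite_eq, Finset.mem_univ, if_true, Finset.sum_sub_distrib, Finset.sum_ite_eq',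
    Finset.sum_ite_irrel, Finset.sum_const_zero]

/-- `R_{UU}(λ)` satisfies the dynamical Yang–Baxter equation
`R^{12}(λ-h^{(3)}) R^{13}(λ) R^{23}(λ-h^{(1)}) = R^{23}(λ) R^{13}(λ-h^{(2)}) R^{12}(λ)`
on `(ℂ^N)^{⊗3}`. -/
theorem RUU_dynamical_Yang_Baxter (N : ℕ) (lam : Fin N → ℂ)
    (hgen : ∀ a b : Fin N, a ≠ b →
      lam a - lam b ≠ 0 ∧ lam a - lam b ≠ 1 ∧ lam a - lam b ≠ -1) :
    R12op N lam (epsv N) * R13op N lam (fun _ _ => 0) * R23op N lam (epsv N) =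
      R23op N lam (fun _ _ => 0) * R13op N lam (epsv N) * R12op N lam (fun _ _ => 0) := by
  rw [Matrix.mul_assoc, Matrix.mul_assoc, ← Matrix.mul_one (R23op N lam (epsv N)),
    ← Matrix.mul_one (R12op N lam (fun _ _ => 0))]
  ext ⟨a, b, c⟩ q
  simp only [R12_mul, R13_mul, R23_mul]
  generalize (1 : Matrix (Fin N × Fin N × Fin N) (Fin N × Fin N × Fin N) ℂ) = M
  by_cases hab : a = b
  · subst hab
    by_cases hac : a = c
    · subst hac
      simp [dcoef, gcoef]
    · obtain ⟨h0, h1, h2⟩ := hgen a c hac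
      have hca : c ≠ a := Ne.symm hac
      rcases lt_or_gt_of_ne hac with h | h
      all_goals
        have h' := h.not_gt
        simp [dcoef, gcoef, epsv, h, h', hac, hca]
        have e1 : lam a - 1 - lam c = (lam a - lam c) - 1 := by ring
        have e2 : lam c - lam a = -(lam a - lam c) := by ring
        have e3 : lam c - (lam a - 1) = -((lam a - lam c) - 1) := by ring
        have e4 : lam a - (lam c - 1) = (lam a - lam c) + 1 := by ring
        have e5 : lam c - 1 - lam a = -((lam a - lam c) + 1) := by ring
        have h3 := sub_ne_zero.mpr h1
        have h4 : lam a - lam c + 1 ≠ 0 := fun hh => h2 (eq_neg_of_add_eq_zero_left hh)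
        simp only [e1, e2, e3, e4, e5]
        clear e1 e2 e3 e4 e5
        generalize lam a - lam c = x at *
        field_simp
        ring
  by_cases hbc : b = c
  · subst hbc
    obtain ⟨h0, h1, h2⟩ := hgen a b hab
    have hba : b ≠ a := Ne.symm hab
    rcases lt_or_gt_of_ne hab with h | h
    all_goals
      have h' := h.not_gt
      simp [dcoef, gcoef, epsv, h, h', hab, hba]
      have e1 : lam a - 1 - lam b = (lam a - lam b) - 1 := by ring
      have e2 : lam b - lam a = -(lam a - lam b) := by ring
      have e3 : lam b - (lam a - 1) = -((lam a - lam b) - 1) := by ring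
      have e4 : lam a - (lam b - 1) = (lam a - lam b) + 1 := by ring
      have e5 : lam b - 1 - lam a = -((lam a - lam b) + 1) := by ring
      have h3 := sub_ne_zero.mpr h1
      have h4 : lam a - lam b + 1 ≠ 0 := fun hh => h2 (eq_neg_of_add_eq_zero_left hh)
      simp only [e1, e2, e3, e4, e5]
      clear e1 e2 e3 e4 e5
      generalize lam a - lam b = x at *
      field_simp
      ring
  by_cases hac : a = c
  · subst hac
    obtain ⟨h0, h1, h2⟩ := hgen a b hab
    have hba : b ≠ a := Ne.symm hab
    rcases lt_or_gt_of_ne hab with h | h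
    all_goals
      have h' := h.not_gt
      simp [dcoef, gcoef, epsv, h, h', hab, hba]
      have e1 : lam a - 1 - lam b = (lam a - lam b) - 1 := by ring
      have e2 : lam b - lam a = -(lam a - lam b) := by ring
      have e3 : lam b - (lam a - 1) = -((lam a - lam b) - 1) := by ring
      have e4 : lam a - (lam b - 1) = (lam a - lam b) + 1 := by ring
      have e5 : lam b - 1 - lam a = -((lam a - lam b) + 1) := by ring
      have h3 := sub_ne_zero.mpr h1
      have h4 : lam a - lam b + 1 ≠ 0 := fun hh => h2 (eq_neg_of_add_eq_zero_left hh)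
      simp only [e1, e2, e3, e4, e5]
      clear e1 e2 e3 e4 e5
      generalize lam a - lam b = x at *
      field_simp
      ring
  have hba : b ≠ a := Ne.symm hab
  have hca : c ≠ a := Ne.symm hac
  have hcb : c ≠ b := Ne.symm hbc
  have x1 := (hgen a b hab).1
  have x2 := (hgen a c hac).1
  have x3 := (hgen b c hbc).1
  have x4 := (hgen b a hba).1
  have x5 := (hgen c a hca).1
  have x6 := (hgen c b hcb).1
  rcases lt_or_gt_of_ne hab with h1 | h1 <;> rcases lt_or_gt_of_ne hbc with h2 | h2 <;>
    rcases lt_or_gt_of_ne hac with h3 | h3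
  all_goals
    have h1' := h1.not_gt
    have h2' := h2.not_gt
    have h3' := h3.not_gt
    simp [dcoef, gcoef, epsv, h1, h2, h3, h1', h2', h3', hab, hba, hac, hca, hbc, hcb]
    have e1 : lam b - lam a = -(lam a - lam b) := by ring
    have e2 : lam c - lam b = -(lam b - lam c) := by ring
    have e3 : lam c - lam a = -((lam a - lam b) + (lam b - lam c)) := by ring
    have e4 : lam a - lam c = (lam a - lam b) + (lam b - lam c) := by ring
    rw [e4] at x2
    simp only [e1, e2, e3, e4]
    clear e1 e2 e3 e4 x4 x5 x6 hgen
    generalize lam a - lam b = x at *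
    generalize lam b - lam c = y at *
    field_simp
    ring
end

section
/- Let v be a standard regular singular vector of weight μ in a module over the small elliptic quantum group e_{τ,γ}(sl_N), and let a < b. Then for any k ≥ 1, t̂_{ab} t̂_{ba}^k v = - [θ((μ_{ab}-k+1)γ) θ(kγ) / (θ(λ_{ab}) θ(λ_{ab}-(μ_{ab}-2k+2)γ))] · t̂_{ba}^{k-1} v. -/
/-- The Jacobi theta function. -/
noncomputable def jtheta (τ u : ℂ) : ℂ :=
  -∑' m : ℤ, Complex.exp ((Real.pi : ℂ) * Complex.I * τ * ((m : ℂ) + 1 / 2) ^ 2 +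
      2 * (Real.pi : ℂ) * Complex.I * ((m : ℂ) + 1 / 2) * (u + 1 / 2))

/-- Summand of the theta series. -/
noncomputable def jterm (τ u : ℂ) (m : ℤ) : ℂ :=
  Complex.exp ((Real.pi : ℂ) * Complex.I * τ * ((m : ℂ) + 1 / 2) ^ 2 +
      2 * (Real.pi : ℂ) * Complex.I * ((m : ℂ) + 1 / 2) * (u + 1 / 2))

theorem jterm_summable (τ u : ℂ) (hτ : 0 < τ.im) : Summable (fun m => ‖jterm τ u m‖) := by
  have h := (summable_jacobiTheta₂_term_iff (u + 1 / 2 + τ / 2) τ).2 hτ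
  have h2 := (h.mul_left (Complex.exp ((Real.pi : ℂ) * Complex.I * τ / 4 +
    (Real.pi : ℂ) * Complex.I * (u + 1 / 2)))).norm
  refine h2.congr fun m => ?_
  rw [jacobiTheta₂_term, jterm, ← Complex.exp_add]
  congr 2
  ring

theorem jtheta_odd (τ u : ℂ) : jtheta τ (-u) = -jtheta τ u := by
  unfold jtheta
  rw [neg_inj, ← (Equiv.subLeft (-1 : ℤ)).tsum_eq, ← tsum_neg]
  refine tsum_congr fun m => ?_
  simp only [Equiv.subLeft_apply]
  have : ∀ z : ℂ, -Complex.exp z = Complex.exp (z - (Real.pi : ℂ) * Complex.I -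
      ((m : ℤ) : ℂ) * (2 * Real.pi * Complex.I)) := by
    intro z
    rw [Complex.exp_sub, Complex.exp_sub, Complex.exp_pi_mul_I, Complex.exp_int_mul_two_pi_mul_I]
    ring
  rw [this]
  congr 1
  push_cast
  ring

/-- Even part. -/
noncomputable def eterm (τ x : ℂ) (r : ℤ) : ℂ :=
  Complex.exp ((Real.pi : ℂ) * Complex.I * τ * (2 * (r : ℂ)) ^ 2 / 2 +
      2 * (Real.pi : ℂ) * Complex.I * (2 * (r : ℂ)) * x)

/-- Odd part. -/
noncomputable def oterm (τ x : ℂ) (r : ℤ) : ℂ :=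
  Complex.exp ((Real.pi : ℂ) * Complex.I * τ * (2 * (r : ℂ) + 1) ^ 2 / 2 +
      2 * (Real.pi : ℂ) * Complex.I * (2 * (r : ℂ) + 1) * x)

theorem eterm_summable (τ u : ℂ) (hτ : 0 < τ.im) : Summable (fun m => ‖eterm τ u m‖) := by
  have h := ((summable_jacobiTheta₂_term_iff (2 * u) (2 * τ)).2 (by simpa using hτ)).norm
  refine h.congr fun m => ?_
  rw [jacobiTheta₂_term, eterm]
  congr 2
  ring

theorem oterm_summable (τ u : ℂ) (hτ : 0 < τ.im) : Summable (fun m => ‖oterm τ u m‖) := by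
  have h := (summable_jacobiTheta₂_term_iff (2 * u + τ) (2 * τ)).2 (by simpa using hτ)
  have h2 := (h.mul_left (Complex.exp ((Real.pi : ℂ) * Complex.I * τ / 2 +
    2 * (Real.pi : ℂ) * Complex.I * u))).norm
  refine h2.congr fun m => ?_
  rw [jacobiTheta₂_term, oterm, ← Complex.exp_add]
  congr 2
  ring

/-- Reindexing by parity. -/
def parEquiv : (ℤ × ℤ) ⊕ (ℤ × ℤ) ≃ ℤ × ℤ where
  toFun := Sum.elim (fun p => (p.1 + p.2, p.1 - p.2 - 1)) (fun p => (p.1 + p.2, p.1 - p.2))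
  invFun := fun p => if (p.1 + p.2) % 2 = 0 then Sum.inr ((p.1 + p.2) / 2, (p.1 - p.2) / 2)
    else Sum.inl ((p.1 + p.2 + 1) / 2, (p.1 - p.2 - 1) / 2)
  left_inv := by
    rintro (⟨r, s⟩ | ⟨r, s⟩)
    · have h : ¬ ((r + s + (r - s - 1)) % 2 = 0) := by omega
      dsimp only [Sum.elim_inl]
      rw [if_neg h, Sum.inl.injEq, Prod.mk.injEq]
      omega
    · have h : (r + s + (r - s)) % 2 = 0 := by omega
      dsimp only [Sum.elim_inr]
      rw [if_pos h, Sum.inr.injEq, Prod.mk.injEq]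
      omega
  right_inv := by
    rintro ⟨i, j⟩
    by_cases h : (i + j) % 2 = 0
    · simp only [if_pos h, Sum.elim_inr, Prod.mk.injEq]
      omega
    · simp only [if_neg h, Sum.elim_inl, Prod.mk.injEq]
      omega

theorem jterm_mul_inl (τ x y : ℂ) (r s : ℤ) :
    jterm τ (x + y) (r + s) * jterm τ (x - y) (r - s - 1) = eterm τ x r * oterm τ y s := by
  have h1 := Complex.exp_int_mul_two_pi_mul_I r
  rw [← mul_one (eterm τ x r * oterm τ y s), ← h1]
  unfold jterm eterm oterm
  simp only [← Complex.exp_add]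
  congr 1
  push_cast
  ring

theorem jterm_mul_inr (τ x y : ℂ) (r s : ℤ) :
    jterm τ (x + y) (r + s) * jterm τ (x - y) (r - s) = -(oterm τ x r * eterm τ y s) := by
  have h1 := Complex.exp_int_mul_two_pi_mul_I r
  rw [← mul_one (oterm τ x r * eterm τ y s), ← h1, ← mul_neg_one, ← Complex.exp_pi_mul_I]
  unfold jterm eterm oterm
  simp only [← Complex.exp_add]
  congr 1
  push_cast
  ring

theorem jtheta_mul (τ x y : ℂ) (hτ : 0 < τ.im) :
    jtheta τ (x + y) * jtheta τ (x - y) =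
      (∑' r, eterm τ x r) * (∑' r, oterm τ y r) - (∑' r, oterm τ x r) * (∑' r, eterm τ y r) := by
  have hj : ∀ u, jtheta τ u = -∑' m, jterm τ u m := fun u => rfl
  have hs := summable_mul_of_summable_norm (jterm_summable τ (x + y) hτ)
    (jterm_summable τ (x - y) hτ)
  have he := summable_mul_of_summable_norm (eterm_summable τ x hτ) (oterm_summable τ y hτ)
  have ho := summable_mul_of_summable_norm (oterm_summable τ x hτ) (eterm_summable τ y hτ)
  rw [hj, hj, neg_mul_neg, tsum_mul_tsum_of_summable_norm (jterm_summable τ (x + y) hτ)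
    (jterm_summable τ (x - y) hτ),
    tsum_mul_tsum_of_summable_norm (eterm_summable τ x hτ) (oterm_summable τ y hτ),
    tsum_mul_tsum_of_summable_norm (oterm_summable τ x hτ) (eterm_summable τ y hτ),
    ← parEquiv.tsum_eq]
  have e1 : ∀ p : ℤ × ℤ, jterm τ (x + y) (parEquiv (Sum.inl p)).1 *
      jterm τ (x - y) (parEquiv (Sum.inl p)).2 = eterm τ x p.1 * oterm τ y p.2 :=
    fun p => jterm_mul_inl τ x y p.1 p.2
  have e2 : ∀ p : ℤ × ℤ, jterm τ (x + y) (parEquiv (Sum.inr p)).1 *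
      jterm τ (x - y) (parEquiv (Sum.inr p)).2 = -(oterm τ x p.1 * eterm τ y p.2) :=
    fun p => jterm_mul_inr τ x y p.1 p.2
  have hsum : HasSum (fun z : (ℤ × ℤ) ⊕ (ℤ × ℤ) => jterm τ (x + y) (parEquiv z).1 *
      jterm τ (x - y) (parEquiv z).2)
      ((∑' p : ℤ × ℤ, eterm τ x p.1 * oterm τ y p.2) +
        -(∑' p : ℤ × ℤ, oterm τ x p.1 * eterm τ y p.2)) := by
    refine HasSum.sum ?_ ?_
    · have h := he.hasSum
      simp only [← e1] at h ⊢
      exact h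
    · have h := ho.hasSum.neg
      simp only [← e2] at h
      exact h
  rw [hsum.tsum_eq, sub_eq_add_neg]

theorem jtheta_three (τ A B C D : ℂ) (hτ : 0 < τ.im) :
    jtheta τ (A + B) * jtheta τ (A - B) * (jtheta τ (C + D) * jtheta τ (C - D)) -
      jtheta τ (A + C) * jtheta τ (A - C) * (jtheta τ (B + D) * jtheta τ (B - D)) +
      jtheta τ (A + D) * jtheta τ (A - D) * (jtheta τ (B + C) * jtheta τ (B - C)) = 0 := by
  simp only [jtheta_mul τ _ _ hτ]
  ring

/-- Shift of the `a`-th coordinate by `-n γ`. -/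
def shn {N : ℕ} (γ : ℂ) (a : Fin N) (n : ℕ) (lam : Fin N → ℂ) : Fin N → ℂ :=
  fun c => lam c - γ * ((n : ℂ) * (if c = a then 1 else 0))

/-- `w` has weight `ν`. -/
def HW {N : ℕ} {V : Type*} [AddCommGroup V] [Module ℂ V] (γ : ℂ)
    (Φ : ((Fin N → ℂ) → (Fin N → ℂ) → ℂ) → ((Fin N → ℂ) → V) → ((Fin N → ℂ) → V))
    (w : (Fin N → ℂ) → V) (ν : Fin N → ℂ) : Prop :=
  ∀ f lam, Φ f w lam = f lam (fun c => lam c - γ * ν c) • w lam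

/-- Weight after `n` lowering steps. -/
def wn {N : ℕ} (μ : Fin N → ℂ) (a b : Fin N) (n : ℕ) : Fin N → ℂ :=
  fun c => μ c + (n : ℂ) * ((if c = b then 1 else 0) - (if c = a then 1 else 0))

section ops

variable {N : ℕ} {γ : ℂ} {V : Type*} [AddCommGroup V] [Module ℂ V]
    {t : Fin N → Fin N → ((Fin N → ℂ) → V) → ((Fin N → ℂ) → V)}
    {Φ : ((Fin N → ℂ) → (Fin N → ℂ) → ℂ) → ((Fin N → ℂ) → V) → ((Fin N → ℂ) → V)}

theorem loc_t
    (hΦone : ∀ (φ : (Fin N → ℂ) → ℂ) w lam, Φ (fun p _ => φ p) w lam = φ lam • w lam)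
    (htf : ∀ a b f w, t a b (Φ f w) =
      Φ (fun p q => f (fun c => p c - γ * (if c = a then 1 else 0))
                      (fun c => q c - γ * (if c = b then 1 else 0))) (t a b w))
    (a b : Fin N) (w w' : (Fin N → ℂ) → V) (z : ℂ) (lam : Fin N → ℂ)
    (h : w (shn γ a 1 lam) = z • w' (shn γ a 1 lam)) :
    t a b w lam = z • t a b w' lam := by
  classical
  have hs : (fun c => lam c - γ * (if c = a then 1 else 0)) = shn γ a 1 lam := by
    funext c; simp [shn]
  have e : Φ (fun p _ => if p = shn γ a 1 lam then 1 else 0) w =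
      Φ (fun p _ => if p = shn γ a 1 lam then z else 0) w' := by
    funext p
    rw [hΦone (fun p => if p = shn γ a 1 lam then 1 else 0),
      hΦone (fun p => if p = shn γ a 1 lam then z else 0)]
    by_cases hp : p = shn γ a 1 lam
    · rw [if_pos hp, if_pos hp, hp, h, one_smul]
    · rw [if_neg hp, if_neg hp, zero_smul, zero_smul]
  have e2 := congrFun (congrArg (t a b) e) lam
  rw [htf, htf] at e2
  rw [hΦone (fun p => if (fun c => p c - γ * (if c = a then 1 else 0)) = shn γ a 1 lam
      then 1 else 0),
    hΦone (fun p => if (fun c => p c - γ * (if c = a then 1 else 0)) = shn γ a 1 lam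
      then z else 0), if_pos hs, if_pos hs, one_smul] at e2
  exact e2

theorem HW_smul
    (hΦmul : ∀ f g w, Φ (fun p q => f p q * g p q) w = Φ f (Φ g w))
    (hΦone : ∀ (φ : (Fin N → ℂ) → ℂ) w lam, Φ (fun p _ => φ p) w lam = φ lam • w lam)
    {w : (Fin N → ℂ) → V} {ν : Fin N → ℂ} (φ : (Fin N → ℂ) → ℂ) (h : HW γ Φ w ν) :
    HW γ Φ (fun lam => φ lam • w lam) ν := by
  intro f lam
  have e : (fun lam => φ lam • w lam) = Φ (fun p _ => φ p) w := by
    funext l; rw [hΦone]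
  rw [e, ← hΦmul, h, hΦone, mul_smul]

theorem HW_t
    (hΦone : ∀ (φ : (Fin N → ℂ) → ℂ) w lam, Φ (fun p _ => φ p) w lam = φ lam • w lam)
    (htf : ∀ a b f w, t a b (Φ f w) =
      Φ (fun p q => f (fun c => p c - γ * (if c = a then 1 else 0))
                      (fun c => q c - γ * (if c = b then 1 else 0))) (t a b w))
    (a b : Fin N) {w : (Fin N → ℂ) → V} {ν ν' : Fin N → ℂ} (h : HW γ Φ w ν)
    (hν : ∀ c, ν' c = ν c + (if c = a then 1 else 0) - (if c = b then 1 else 0)) :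
    HW γ Φ (t a b w) ν' := by
  intro f lam
  have e := congrFun (htf a b (fun p q => f (fun c => p c + γ * (if c = a then 1 else 0))
    (fun c => q c + γ * (if c = b then 1 else 0))) w) lam
  simp only [sub_add_cancel] at e
  rw [← e]
  apply loc_t hΦone htf
  rw [h]
  congr 2
  · funext c; simp [shn]
  · funext c; simp only [shn, hν]; push_cast; ring

theorem HW_iter
    (hΦone : ∀ (φ : (Fin N → ℂ) → ℂ) w lam, Φ (fun p _ => φ p) w lam = φ lam • w lam)
    (htf : ∀ a b f w, t a b (Φ f w) =
      Φ (fun p q => f (fun c => p c - γ * (if c = a then 1 else 0))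
                      (fun c => q c - γ * (if c = b then 1 else 0))) (t a b w))
    (a b : Fin N) {v : (Fin N → ℂ) → V} {μ : Fin N → ℂ} (h : HW γ Φ v μ) (n : ℕ) :
    HW γ Φ ((t b a)^[n] v) (wn μ a b n) := by
  induction n with
  | zero =>
    have : wn μ a b 0 = μ := by funext c; simp [wn]
    rw [this]; exact h
  | succ n ih =>
    rw [Function.iterate_succ_apply']
    refine HW_t hΦone htf b a ih fun c => ?_
    simp only [wn]; push_cast; ring

theorem shn_ab {a b : Fin N} (hab : a ≠ b) (n : ℕ) (lam : Fin N → ℂ) :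
    shn γ b n lam a - shn γ b n lam b = lam a - lam b + n * γ := by
  simp [shn, hab]; ring

theorem taa_iter {τ : ℂ}
    (hΦone : ∀ (φ : (Fin N → ℂ) → ℂ) w lam, Φ (fun p _ => φ p) w lam = φ lam • w lam)
    (htf : ∀ a b f w, t a b (Φ f w) =
      Φ (fun p q => f (fun c => p c - γ * (if c = a then 1 else 0))
                      (fun c => q c - γ * (if c = b then 1 else 0))) (t a b w))
    (htab : ∀ a b c w, a ≠ b →
      Φ (fun p _ => jtheta τ (p a - p b - γ)) (t a c (t b c w)) =
        Φ (fun p _ => jtheta τ (p a - p b + γ)) (t b c (t a c w)))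
    {a b : Fin N} (hab : a ≠ b) (w : (Fin N → ℂ) → V) (n : ℕ) :
    ∀ (lam : Fin N → ℂ) (x : ℂ), x = lam a - lam b →
      (∀ j : ℤ, -1 ≤ j → j ≤ n → jtheta τ (x + j * γ) ≠ 0) →
      t a a ((t b a)^[n] w) lam = (jtheta τ (x + n * γ) * jtheta τ (x + (n - 1) * γ) /
        (jtheta τ x * jtheta τ (x - γ))) • ((t b a)^[n] (t a a w)) lam := by
  induction n with
  | zero =>
    intro lam x hx H
    have h0 := H 0 (by norm_num) (by norm_num)
    have h1 := H (-1) (by norm_num) (by norm_num)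
    have e0 : x + ((0 : ℤ) : ℂ) * γ = x := by push_cast; ring
    have e1 : x + ((-1 : ℤ) : ℂ) * γ = x - γ := by push_cast; ring
    rw [e0] at h0
    rw [e1] at h1
    have e2 : x + ((0 : ℕ) : ℂ) * γ = x := by push_cast; ring
    have e3 : x + (((0 : ℕ) : ℂ) - 1) * γ = x - γ := by push_cast; ring
    rw [e2, e3, div_self (mul_ne_zero h0 h1), one_smul]
    rfl
  | succ n ih =>
    intro lam x hx H
    have h0 := H 0 (by norm_num) (by positivity)
    have h1 := H (-1) (by norm_num) (by push_cast; linarith [n.cast_nonneg (α := ℤ)])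
    have h2 := H 1 (by norm_num) (by push_cast; linarith [n.cast_nonneg (α := ℤ)])
    have e0 : x + ((0 : ℤ) : ℂ) * γ = x := by push_cast; ring
    have e1 : x + ((-1 : ℤ) : ℂ) * γ = x - γ := by push_cast; ring
    have e2 : x + ((1 : ℤ) : ℂ) * γ = x + γ := by push_cast; ring
    rw [e0] at h0
    rw [e1] at h1
    rw [e2] at h2
    rw [Function.iterate_succ_apply', Function.iterate_succ_apply']
    have hx' : x + γ = shn γ b 1 lam a - shn γ b 1 lam b := by
      rw [shn_ab hab, hx]; push_cast; ring
    have IH := ih (shn γ b 1 lam) (x + γ) hx' (by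
      intro j hj1 hj2
      have := H (j + 1) (by linarith) (by push_cast; linarith)
      have e : x + ((j + 1 : ℤ) : ℂ) * γ = x + γ + j * γ := by push_cast; ring
      rwa [e] at this)
    have L := loc_t hΦone htf b a _ _ _ lam IH
    have T := congrFun (htab a b a ((t b a)^[n] w) hab) lam
    rw [hΦone (fun p => jtheta τ (p a - p b - γ)), hΦone (fun p => jtheta τ (p a - p b + γ)),
      L, ← hx] at T
    apply (smul_right_injective V h1)
    dsimp only
    rw [T, smul_smul, smul_smul]
    congr 1
    have e3 : x + γ + n * γ = x + ((n + 1 : ℕ) : ℂ) * γ := by push_cast; ring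
    have e4 : x + γ + ((n : ℂ) - 1) * γ = x + (((n + 1 : ℕ) : ℂ) - 1) * γ := by push_cast; ring
    have e5 : x + γ - γ = x := by ring
    rw [e3, e4, e5]
    field_simp

theorem C_scal (τ γ x m n : ℂ) (hτ : 0 < τ.im)
    (h0 : jtheta τ x ≠ 0) (h1 : jtheta τ (x + γ) ≠ 0) (hm : jtheta τ (x - γ) ≠ 0)
    (hF : jtheta τ (x + (n - 1 - m) * γ) ≠ 0) :
    jtheta τ (γ - (x - (m - 2 * n) * γ)) * jtheta τ x *
      (-(jtheta τ ((m - n) * γ) * jtheta τ ((n + 1) * γ)) * jtheta τ (x + (n - 1) * γ) /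
        (jtheta τ x * jtheta τ (x - γ) * jtheta τ (x + (n - 1 - m) * γ))) =
    jtheta τ (x + γ) * jtheta τ (-(x - (m - 2 * n) * γ)) *
      (-(jtheta τ ((m - n + 1) * γ) * jtheta τ (n * γ)) * jtheta τ (x + (n - 1) * γ) /
        (jtheta τ (x + γ) * jtheta τ x * jtheta τ (x + (n - 1 - m) * γ))) +
    jtheta τ ((m - 2 * n) * γ) * jtheta τ γ *
      (jtheta τ (x + n * γ) * jtheta τ (x + (n - 1) * γ) / (jtheta τ x * jtheta τ (x - γ))) := by
  have K := jtheta_three τ (x - (m - 2 * n + 1) * γ / 2) ((m - 2 * n + 1) * γ / 2)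
    ((m - 2 * n - 1) * γ / 2) ((m + 1) * γ / 2) hτ
  have k1 : x - (m - 2 * n + 1) * γ / 2 + (m - 2 * n + 1) * γ / 2 = x := by ring
  have k2 : x - (m - 2 * n + 1) * γ / 2 - (m - 2 * n + 1) * γ / 2
    = -(γ - (x - (m - 2 * n) * γ)) := by ring
  have k3 : (m - 2 * n - 1) * γ / 2 + (m + 1) * γ / 2 = (m - n) * γ := by ring
  have k4 : (m - 2 * n - 1) * γ / 2 - (m + 1) * γ / 2 = -((n + 1) * γ) := by ring
  have k5 : x - (m - 2 * n + 1) * γ / 2 + (m - 2 * n - 1) * γ / 2 = x - γ := by ring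
  have k6 : x - (m - 2 * n + 1) * γ / 2 - (m - 2 * n - 1) * γ / 2 = x - (m - 2 * n) * γ := by ring
  have k7 : (m - 2 * n + 1) * γ / 2 + (m + 1) * γ / 2 = (m - n + 1) * γ := by ring
  have k8 : (m - 2 * n + 1) * γ / 2 - (m + 1) * γ / 2 = -(n * γ) := by ring
  have k9 : x - (m - 2 * n + 1) * γ / 2 + (m + 1) * γ / 2 = x + n * γ := by ring
  have k10 : x - (m - 2 * n + 1) * γ / 2 - (m + 1) * γ / 2 = x + (n - 1 - m) * γ := by ring
  have k11 : (m - 2 * n + 1) * γ / 2 + (m - 2 * n - 1) * γ / 2 = (m - 2 * n) * γ := by ring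
  have k12 : (m - 2 * n + 1) * γ / 2 - (m - 2 * n - 1) * γ / 2 = γ := by ring
  rw [k1, k2, k3, k4, k5, k6, k7, k8, k9, k10, k11, k12] at K
  simp only [jtheta_odd] at K ⊢
  generalize jtheta τ (x + (n - 1) * γ) = E at *
  generalize jtheta τ (x + (n - 1 - m) * γ) = F at *
  generalize jtheta τ (x + n * γ) = G at *
  generalize jtheta τ (x + γ) = g1 at *
  generalize jtheta τ (x - γ) = gm at *
  generalize jtheta τ (γ - (x - (m - 2 * n) * γ)) = gA at *
  generalize jtheta τ (x - (m - 2 * n) * γ) = gy at *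
  generalize jtheta τ ((m - 2 * n) * γ) = gxy at *
  generalize jtheta τ x = gx at *
  generalize jtheta τ γ = gg at *
  generalize jtheta τ ((m - n) * γ) = M0 at *
  generalize jtheta τ ((m - n + 1) * γ) = M1 at *
  generalize jtheta τ ((n + 1) * γ) = K1 at *
  generalize jtheta τ (n * γ) = K0 at *
  have h : gA * gx * (-(M0 * K1)) = gy * (M1 * K0) * gm + gxy * gg * (G * F) := by
    linear_combination (-1 : ℂ) * K
  field_simp
  linear_combination E * h

theorem tab_iter {τ : ℂ} (hτ : 0 < τ.im)
    (hΦone : ∀ (φ : (Fin N → ℂ) → ℂ) w lam, Φ (fun p _ => φ p) w lam = φ lam • w lam)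
    (htf : ∀ a b f w, t a b (Φ f w) =
      Φ (fun p q => f (fun c => p c - γ * (if c = a then 1 else 0))
                      (fun c => q c - γ * (if c = b then 1 else 0))) (t a b w))
    (htbc : ∀ a b c w, t a b (t a c w) = t a c (t a b w))
    (htab : ∀ a b c w, a ≠ b →
      Φ (fun p _ => jtheta τ (p a - p b - γ)) (t a c (t b c w)) =
        Φ (fun p _ => jtheta τ (p a - p b + γ)) (t b c (t a c w)))
    (htac : ∀ a b c d w, a ≠ c → b ≠ d →
      Φ (fun p q => jtheta τ (q b - q d + γ) * jtheta τ (p a - p c)) (t a b (t c d w)) -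
          Φ (fun p q => jtheta τ (p a - p c + γ) * jtheta τ (q b - q d)) (t c d (t a b w)) =
        Φ (fun p q => jtheta τ ((p a - p c) + (q b - q d)) * jtheta τ γ) (t a d (t c b w)))
    {a b : Fin N} (hab : a ≠ b) {v : (Fin N → ℂ) → V} {μ : Fin N → ℂ} (hv : HW γ Φ v μ)
    (hsing : t a b v = 0) (m : ℂ) (hm : m = μ a - μ b) (n : ℕ) :
    ∀ (lam : Fin N → ℂ) (x : ℂ), x = lam a - lam b →
      (∀ j : ℤ, -1 ≤ j → j ≤ n + 1 → jtheta τ (x + j * γ) ≠ 0) →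
      (∀ j : ℤ, -1 ≤ j → j ≤ 2 * n - 1 → jtheta τ (x + (j - m) * γ) ≠ 0) →
      t a b ((t b a)^[n + 1] v) lam =
        (-(jtheta τ ((m - n) * γ) * jtheta τ ((n + 1) * γ)) * jtheta τ (x + (n - 1) * γ) /
        (jtheta τ x * jtheta τ (x - γ) * jtheta τ (x + (n - 1 - m) * γ))) •
          ((t b a)^[n] (t a a (t b b v))) lam := by
  have step : ∀ (n : ℕ) (lam : Fin N → ℂ) (x : ℂ), x = lam a - lam b →
      (∀ j : ℤ, -1 ≤ j → j ≤ n + 1 → jtheta τ (x + j * γ) ≠ 0) →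
      (∀ j : ℤ, -1 ≤ j → j ≤ 2 * n - 1 → jtheta τ (x + (j - m) * γ) ≠ 0) →
      t b a (t a b ((t b a)^[n] v)) lam =
        (-(jtheta τ ((m - n + 1) * γ) * jtheta τ (n * γ)) * jtheta τ (x + (n - 1) * γ) /
        (jtheta τ (x + γ) * jtheta τ x * jtheta τ (x + (n - 1 - m) * γ))) •
          ((t b a)^[n] (t a a (t b b v))) lam →
      (-1 ≤ 2 * (n : ℤ) - 1) →
      t a b ((t b a)^[n + 1] v) lam =
        (-(jtheta τ ((m - n) * γ) * jtheta τ ((n + 1) * γ)) * jtheta τ (x + (n - 1) * γ) /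
        (jtheta τ x * jtheta τ (x - γ) * jtheta τ (x + (n - 1 - m) * γ))) •
          ((t b a)^[n] (t a a (t b b v))) lam := by
    intro n lam x hx H1 H2 hprev hn
    have h0 := H1 0 (by norm_num) (by positivity)
    have h1 := H1 (-1) (by norm_num) (by linarith [n.cast_nonneg (α := ℤ)])
    have h2 := H1 1 (by norm_num) (by linarith [n.cast_nonneg (α := ℤ)])
    have h3 := H2 (n - 1) (by linarith) (by linarith)
    have h4 := H2 (2 * n - 1) (by linarith) (by linarith)
    have e0 : x + ((0 : ℤ) : ℂ) * γ = x := by push_cast; ring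
    have e1 : x + ((-1 : ℤ) : ℂ) * γ = x - γ := by push_cast; ring
    have e2 : x + ((1 : ℤ) : ℂ) * γ = x + γ := by push_cast; ring
    have e3 : x + (((n - 1 : ℤ) : ℂ) - m) * γ = x + (n - 1 - m) * γ := by push_cast; ring
    have e4 : x + (((2 * n - 1 : ℤ) : ℂ) - m) * γ = -(γ - (x - (m - 2 * n) * γ)) := by
      push_cast; ring
    rw [e0] at h0
    rw [e1] at h1
    rw [e2] at h2
    rw [e3] at h3
    rw [e4, jtheta_odd, neg_ne_zero] at h4
    have hW := HW_iter hΦone htf a b hv n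
    have W1 : HW γ Φ (t a b (t b a ((t b a)^[n] v))) (wn μ a b n) :=
      HW_t hΦone htf a b (HW_t hΦone htf b a hW (fun c => rfl)) (fun c => by ring)
    have W2 : HW γ Φ (t b a (t a b ((t b a)^[n] v))) (wn μ a b n) :=
      HW_t hΦone htf b a (HW_t hΦone htf a b hW (fun c => rfl)) (fun c => by ring)
    have W3 : HW γ Φ (t a a (t b b ((t b a)^[n] v))) (wn μ a b n) :=
      HW_t hΦone htf a a (HW_t hΦone htf b b hW (fun c => rfl)) (fun c => by ring)
    have hq : (lam b - γ * wn μ a b n b) - (lam a - γ * wn μ a b n a) =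
        -(x - (m - 2 * n) * γ) := by
      simp only [wn, if_neg hab, if_neg hab.symm, if_true, hx, hm]; ring
    have hbb : t b b ((t b a)^[n] v) = (t b a)^[n] (t b b v) := by
      have hc : Function.Commute (t b b) (t b a) := fun w => htbc b b a w
      exact (hc.iterate_right n) v
    have D := taa_iter hΦone htf htab hab (t b b v) n lam x hx
      (fun j hj1 hj2 => H1 j hj1 (by linarith))
    have T := congrFun (htac a b b a ((t b a)^[n] v) hab hab.symm) lam
    rw [Pi.sub_apply, W1, W2, W3, hq, hprev, hbb, D, ← hx] at T
    have e5 : -(x - (m - 2 * n) * γ) + γ = γ - (x - (m - 2 * n) * γ) := by ring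
    have e6 : x + -(x - (m - 2 * n) * γ) = (m - 2 * n) * γ := by ring
    rw [e5, e6, sub_eq_iff_eq_add] at T
    rw [Function.iterate_succ_apply']
    apply smul_right_injective V (mul_ne_zero h4 h0)
    dsimp only
    rw [T, smul_smul, smul_smul, smul_smul, ← add_smul, C_scal τ γ x m n hτ h0 h2 h1 h3, add_comm]
  have tz : t b a (0 : (Fin N → ℂ) → V) = 0 := by
    funext l
    have := loc_t hΦone htf b a (0 : (Fin N → ℂ) → V) 0 0 l (by simp)
    simpa using this
  have th0 : jtheta τ 0 = 0 := by
    have h := jtheta_odd τ 0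
    rw [neg_zero] at h
    exact self_eq_neg.mp h
  induction n with
  | zero =>
    intro lam x hx H1 H2
    refine step 0 lam x hx H1 H2 ?_ (by norm_num)
    simp only [Function.iterate_zero, id, hsing, tz, Nat.cast_zero, zero_mul, th0, mul_zero,
      neg_zero, zero_div, zero_smul, Pi.zero_apply]
  | succ n ih =>
    intro lam x hx H1 H2
    refine step (n + 1) lam x hx H1 H2 ?_ (by push_cast; linarith [n.cast_nonneg (α := ℤ)])
    have hx' : x + γ = shn γ b 1 lam a - shn γ b 1 lam b := by
      rw [shn_ab hab, hx]; push_cast; ring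
    have IH := ih (shn γ b 1 lam) (x + γ) hx' (by
      intro j hj1 hj2
      have := H1 (j + 1) (by linarith) (by push_cast; linarith)
      have e : x + ((j + 1 : ℤ) : ℂ) * γ = x + γ + j * γ := by push_cast; ring
      rwa [e] at this) (by
      intro j hj1 hj2
      have := H2 (j + 1) (by linarith) (by push_cast; linarith)
      have e : x + (((j + 1 : ℤ) : ℂ) - m) * γ = x + γ + (j - m) * γ := by push_cast; ring
      rwa [e] at this)
    have L := loc_t hΦone htf b a _ _ _ lam IH
    rw [L, Function.iterate_succ_apply' (t b a) n (t a a (t b b v))]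
    have e1 : (m - ((n + 1 : ℕ) : ℂ) + 1) * γ = (m - n) * γ := by push_cast; ring
    have e2 : ((n + 1 : ℕ) : ℂ) * γ = ((n : ℂ) + 1) * γ := by push_cast; ring
    have e3 : x + (((n + 1 : ℕ) : ℂ) - 1) * γ = x + γ + (n - 1) * γ := by push_cast; ring
    have e4 : x + (((n + 1 : ℕ) : ℂ) - 1 - m) * γ = x + γ + (n - 1 - m) * γ := by push_cast; ring
    have e5 : x + γ - γ = x := by ring
    rw [e1, e2, e3, e4, e5]

end ops

/-- The product `∏_{c<a} θ(λ_{ca})`. -/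
noncomputable def Nf {N : ℕ} (τ : ℂ) (a : Fin N) (lam : Fin N → ℂ) : ℂ :=
  ∏ c : Fin N, if (c : ℕ) < (a : ℕ) then jtheta τ (lam c - lam a) else 1

/-- The product `∏_{c<b, c≠a} θ(λ_{cb})`. -/
noncomputable def Mf {N : ℕ} (τ : ℂ) (a b : Fin N) (lam : Fin N → ℂ) : ℂ :=
  ∏ c : Fin N, if (c : ℕ) < (b : ℕ) ∧ c ≠ a then jtheta τ (lam c - lam b) else 1

theorem Nf_eq {N : ℕ} (τ : ℂ) {a b : Fin N} (hab : a < b) (lam : Fin N → ℂ) :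
    Nf τ b lam = jtheta τ (lam a - lam b) * Mf τ a b lam := by
  have h : ∀ c : Fin N, (if (c : ℕ) < (b : ℕ) then jtheta τ (lam c - lam b) else 1) =
      (if c = a then jtheta τ (lam a - lam b) else 1) *
      (if (c : ℕ) < (b : ℕ) ∧ c ≠ a then jtheta τ (lam c - lam b) else 1) := by
    intro c
    by_cases hc : c = a
    · subst hc
      have : (c : ℕ) < b := hab
      simp [this]
    · simp [hc]
  unfold Nf Mf
  rw [Finset.prod_congr rfl (fun c _ => h c), Finset.prod_mul_distrib]
  simp

theorem Nf_congr {N : ℕ} (τ : ℂ) {a : Fin N} {lam lam' : Fin N → ℂ}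
    (h : ∀ c, c ≤ a → lam c = lam' c) : Nf τ a lam = Nf τ a lam' := by
  unfold Nf
  refine Finset.prod_congr rfl fun c _ => ?_
  by_cases hc : (c : ℕ) < a
  · rw [if_pos hc, if_pos hc, h c (le_of_lt hc), h a le_rfl]
  · rw [if_neg hc, if_neg hc]

theorem Mf_congr {N : ℕ} (τ : ℂ) {a b : Fin N} (hab : a ≠ b) {lam lam' : Fin N → ℂ}
    (h : ∀ c, c ≠ a → lam c = lam' c) : Mf τ a b lam = Mf τ a b lam' := by
  unfold Mf
  refine Finset.prod_congr rfl fun c _ => ?_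
  by_cases hc : (c : ℕ) < b ∧ c ≠ a
  · rw [if_pos hc, if_pos hc, h c hc.2, h b hab.symm]
  · rw [if_neg hc, if_neg hc]

/-- Coefficient of `t_{ba}^n v` in `t̂_{ba}^n v`. -/
noncomputable def Qf {N : ℕ} (τ γ : ℂ) (μ : Fin N → ℂ) (a b : Fin N) : ℕ → (Fin N → ℂ) → ℂ
  | 0 => fun _ => 1
  | n + 1 => fun lam => Nf τ b lam * (Nf τ a (fun c => lam c - γ * wn μ a b (n + 1) c))⁻¹ *
      Qf τ γ μ a b n (shn γ b 1 lam)

theorem Qf_rel {N : ℕ} (τ γ : ℂ) (μ : Fin N → ℂ) {a b : Fin N} (hab : a < b) (n : ℕ) :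
    ∀ lam : Fin N → ℂ, Qf τ γ μ a b (n + 1) (shn γ a 1 lam) =
      jtheta τ (lam a - lam b - γ) * Mf τ a b (shn γ b n lam) *
        (Nf τ a (fun c => lam c - γ * μ c))⁻¹ * Qf τ γ μ a b n lam := by
  have hne : a ≠ b := ne_of_lt hab
  have hN : ∀ lam : Fin N → ℂ, Nf τ b (shn γ a 1 lam) =
      jtheta τ (lam a - lam b - γ) * Mf τ a b lam := by
    intro lam
    rw [Nf_eq τ hab, Mf_congr τ hne (lam' := lam) (fun c hc => by simp [shn, hc])]
    congr 2
    simp [shn, hne.symm]; ring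
  have hA : ∀ (n : ℕ) (lam : Fin N → ℂ),
      Nf τ a (fun c => shn γ a 1 lam c - γ * wn μ a b (n + 1) c) =
      Nf τ a (fun c => lam c - γ * wn μ a b n c) := by
    intro n lam
    refine Nf_congr τ fun c hc => ?_
    have : c ≠ b := ne_of_lt (lt_of_le_of_lt hc hab)
    simp only [shn, wn, if_neg this]
    push_cast; ring
  induction n with
  | zero =>
    intro lam
    have e1 : shn γ b 0 lam = lam := by funext c; simp [shn]
    have e2 : wn μ a b 0 = μ := by funext c; simp [wn]
    have := hA 0 lam
    rw [e2] at this
    simp only [Qf]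
    rw [hN, this, e1]
  | succ n ih =>
    intro lam
    have e1 : shn γ b 1 (shn γ a 1 lam) = shn γ a 1 (shn γ b 1 lam) := by
      funext c; simp only [shn]; ring
    have e2 : shn γ b n (shn γ b 1 lam) = shn γ b (n + 1) lam := by
      funext c; simp only [shn]; push_cast; ring
    have e3 : Nf τ a (fun c => shn γ b 1 lam c - γ * μ c) = Nf τ a (fun c => lam c - γ * μ c) := by
      refine Nf_congr τ fun c hc => ?_
      have : c ≠ b := ne_of_lt (lt_of_le_of_lt hc hab)
      simp [shn, this]
    have e4 : shn γ b 1 lam a - shn γ b 1 lam b - γ = lam a - lam b := by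
      rw [shn_ab hne]; push_cast; ring
    have u : ∀ (n : ℕ) lam, Qf τ γ μ a b (n + 1) lam =
      Nf τ b lam * (Nf τ a (fun c => lam c - γ * wn μ a b (n + 1) c))⁻¹ *
      Qf τ γ μ a b n (shn γ b 1 lam) := fun _ _ => rfl
    rw [u (n + 1), e1, ih, e2, e3, e4, hN, hA, u n lam, Nf_eq τ hab lam]
    ring

/-- Let `v` be a standard regular singular vector of weight `μ` in a module over the small
elliptic quantum group `e_{τ,γ}(sl_N)`, and `a < b`.  Then for `k ≥ 1`,
`t̂_{ab} t̂_{ba}^k v = -[θ((μ_{ab}-k+1)γ) θ(kγ) / (θ(λ_{ab}) θ(λ_{ab}-(μ_{ab}-2k+2)γ))] ·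
t̂_{ba}^{k-1} v`  (at generic `λ`).

A module over `e_{τ,γ}(sl_N)` on `Fun(V) = (h* → V)` is encoded by the action `t` of the
generators `t_{ab}`, the action `Φ` of functions `f(λ^{(1)},λ^{(2)})`, and the relations
(tf), (tbc), (tab), (tac) of the operator algebra `e^𝒪_{τ,γ}(sl_N)` (the latter two with
denominators cleared); `t̂_{ab}` are the modified generators. -/
theorem singular_vector_lowering (N : ℕ) (τ γ : ℂ) (hτ : 0 < τ.im) (hγ : γ ≠ 0)
    (V : Type*) [AddCommGroup V] [Module ℂ V]
    (t : Fin N → Fin N → ((Fin N → ℂ) → V) → ((Fin N → ℂ) → V))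
    (Φ : ((Fin N → ℂ) → (Fin N → ℂ) → ℂ) → ((Fin N → ℂ) → V) → ((Fin N → ℂ) → V))
    (that : Fin N → Fin N → ((Fin N → ℂ) → V) → ((Fin N → ℂ) → V))
    -- the action of the function algebra
    (hΦmul : ∀ f g w, Φ (fun p q => f p q * g p q) w = Φ f (Φ g w))
    (hΦadd : ∀ f g w, Φ (fun p q => f p q + g p q) w = Φ f w + Φ g w)
    (hΦone : ∀ (φ : (Fin N → ℂ) → ℂ) w lam, Φ (fun p _ => φ p) w lam = φ lam • w lam)
    -- relation (tf)
    (htf : ∀ a b f w, t a b (Φ f w) =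
      Φ (fun p q => f (fun c => p c - γ * (if c = a then 1 else 0))
                      (fun c => q c - γ * (if c = b then 1 else 0))) (t a b w))
    -- relation (tbc)
    (htbc : ∀ a b c w, t a b (t a c w) = t a c (t a b w))
    -- relation (tab), denominators cleared
    (htab : ∀ a b c w, a ≠ b →
      Φ (fun p _ => jtheta τ (p a - p b - γ)) (t a c (t b c w)) =
        Φ (fun p _ => jtheta τ (p a - p b + γ)) (t b c (t a c w)))
    -- relation (tac), denominators cleared
    (htac : ∀ a b c d w, a ≠ c → b ≠ d →
      Φ (fun p q => jtheta τ (q b - q d + γ) * jtheta τ (p a - p c)) (t a b (t c d w)) -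
          Φ (fun p q => jtheta τ (p a - p c + γ) * jtheta τ (q b - q d)) (t c d (t a b w)) =
        Φ (fun p q => jtheta τ ((p a - p c) + (q b - q d)) * jtheta τ γ) (t a d (t c b w)))
    -- the modified generators t̂_{ab}
    (hthat : ∀ a b w, that a b w =
      Φ (fun p q =>
          (∏ c : Fin N, if (c : ℕ) < (a : ℕ) then jtheta τ (p c - p a) else 1) *
            (∏ c : Fin N, if (c : ℕ) < (b : ℕ) then jtheta τ (q c - q b) else 1)⁻¹)
        (t a b w))
    -- `v` is a standard regular singular vector of weight `μ`
    (v : (Fin N → ℂ) → V) (μ : Fin N → ℂ) (hv0 : v ≠ 0)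
    (hsing : ∀ a b : Fin N, a < b → t a b v = 0)
    (hwt : ∀ f, Φ f v = fun lam => f lam (fun c => lam c - γ * μ c) • v lam)
    (hstd : ∀ a, that a a v = v)
    (a b : Fin N) (hab : a < b) (k : ℕ) (hk : 1 ≤ k) :
    ∀ lam : Fin N → ℂ,
      (∀ j : ℤ, j.natAbs ≤ 2 * k + 2 →
        jtheta τ (lam a - lam b + (j : ℂ) * γ) ≠ 0 ∧
          jtheta τ (lam a - lam b - ((μ a - μ b) + (j : ℂ)) * γ) ≠ 0) →
      that a b ((that b a)^[k] v) lam =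
        (-(jtheta τ (((μ a - μ b) - (k : ℂ) + 1) * γ) * jtheta τ ((k : ℂ) * γ)) /
            (jtheta τ (lam a - lam b) *
              jtheta τ (lam a - lam b - ((μ a - μ b) - 2 * (k : ℂ) + 2) * γ))) •
          ((that b a)^[k - 1] v) lam := by
  intro lam hgen
  obtain ⟨n, rfl⟩ : ∃ n, k = n + 1 := ⟨k - 1, by omega⟩
  have hne : a ≠ b := ne_of_lt hab
  have hv : HW γ Φ v μ := fun f l => by rw [hwt f]
  have hthat' : ∀ (a b : Fin N) (w : (Fin N → ℂ) → V) (ν : Fin N → ℂ) (l : Fin N → ℂ),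
      HW γ Φ (t a b w) ν → that a b w l =
        (Nf τ a l * (Nf τ b (fun c => l c - γ * ν c))⁻¹) • t a b w l := by
    intro a b w ν l hw
    rw [hthat, hw]
    rfl
  -- iterates of the modified generator
  have hiter : ∀ n : ℕ, (that b a)^[n] v =
      fun l => Qf τ γ μ a b n l • ((t b a)^[n] v) l := by
    intro n
    induction n with
    | zero => funext l; simp [Qf]
    | succ n ih =>
      funext l
      rw [Function.iterate_succ_apply', ih, Function.iterate_succ_apply']
      have hw := HW_smul hΦmul hΦone (Qf τ γ μ a b n) (HW_iter hΦone htf a b hv n)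
      rw [hthat' b a _ (wn μ a b (n + 1)) l (HW_t hΦone htf b a hw (fun c => by
        simp only [wn]; push_cast; ring))]
      rw [loc_t hΦone htf b a _ ((t b a)^[n] v) (Qf τ γ μ a b n (shn γ b 1 l)) l rfl, smul_smul]
      rfl
  -- `v` in terms of `u = t_aa t_bb v`
  have hvu : ∀ l, v l = (Nf τ a l * (Nf τ a (fun c => l c - γ * μ c))⁻¹ *
      (Nf τ b (shn γ a 1 l) * (Nf τ b (fun c => shn γ a 1 l c - γ * μ c))⁻¹)) •
        t a a (t b b v) l := by
    have hb : ∀ l, v l = (Nf τ b l * (Nf τ b (fun c => l c - γ * μ c))⁻¹) • t b b v l := by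
      intro l
      rw [← hthat' b b v μ l (HW_t hΦone htf b b hv (fun c => by ring)), hstd]
    intro l
    have ha : v l = (Nf τ a l * (Nf τ a (fun c => l c - γ * μ c))⁻¹) • t a a v l := by
      rw [← hthat' a a v μ l (HW_t hΦone htf a a hv (fun c => by ring)), hstd]
    rw [ha, loc_t hΦone htf a a v (t b b v) _ l (hb _), smul_smul]
  have hvun : ∀ (R : (Fin N → ℂ) → ℂ) (u : (Fin N → ℂ) → V), (∀ l, v l = R l • u l) →
      ∀ (n : ℕ) l, ((t b a)^[n] v) l = R (shn γ b n l) • ((t b a)^[n] u) l := by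
    intro R u hR n
    induction n with
    | zero =>
      intro l
      have e1 : shn γ b 0 l = l := by funext c; simp [shn]
      rw [e1]; exact hR l
    | succ n ih =>
      intro l
      have e2 : shn γ b n (shn γ b 1 l) = shn γ b (n + 1) l := by
        funext c; simp only [shn]; push_cast; ring
      rw [Function.iterate_succ_apply', Function.iterate_succ_apply',
        loc_t hΦone htf b a _ _ _ l (ih _), e2]
  have RHS := hvun _ _ hvu n lam
  -- the left-hand side
  have LHS : that a b ((that b a)^[n + 1] v) lam =
      (Nf τ a lam * (Nf τ b (fun c => lam c - γ * wn μ a b n c))⁻¹ *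
        Qf τ γ μ a b (n + 1) (shn γ a 1 lam)) • t a b ((t b a)^[n + 1] v) lam := by
    rw [hiter]
    have hw := HW_smul hΦmul hΦone (Qf τ γ μ a b (n + 1)) (HW_iter hΦone htf a b hv (n + 1))
    rw [hthat' a b _ (wn μ a b n) lam (HW_t hΦone htf a b hw (fun c => by
        simp only [wn]; push_cast; ring))]
    rw [loc_t hΦone htf a b _ ((t b a)^[n + 1] v) (Qf τ γ μ a b (n + 1) (shn γ a 1 lam)) lam rfl,
      smul_smul]
  have H1 : ∀ j : ℤ, -1 ≤ j → j ≤ n + 1 → jtheta τ (lam a - lam b + j * γ) ≠ 0 :=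
    fun j h1 h2 => (hgen j (by omega)).1
  have H2 : ∀ j : ℤ, -1 ≤ j → j ≤ 2 * n →
      jtheta τ (lam a - lam b + (j - (μ a - μ b)) * γ) ≠ 0 := by
    intro j h1 h2
    have := (hgen (-j) (by omega)).2
    have e : lam a - lam b - ((μ a - μ b) + ((-j : ℤ) : ℂ)) * γ =
      lam a - lam b + (j - (μ a - μ b)) * γ := by push_cast; ring
    rwa [e] at this
  have CC := tab_iter hτ hΦone htf htbc htab htac hne hv (hsing a b hab) _ rfl n lam _ rfl H1
    (fun j h1 h2 => H2 j h1 (by linarith))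
  have h0 := H1 0 (by norm_num) (by positivity)
  have h1 := H1 (-1) (by norm_num) (by linarith [n.cast_nonneg (α := ℤ)])
  have h3 := H2 (n - 1) (by linarith [n.cast_nonneg (α := ℤ)])
    (by linarith [n.cast_nonneg (α := ℤ)])
  have h4 := H2 (2 * n) (by linarith [n.cast_nonneg (α := ℤ)]) le_rfl
  have e0 : lam a - lam b + ((0 : ℤ) : ℂ) * γ = lam a - lam b := by push_cast; ring
  have e1 : lam a - lam b + ((-1 : ℤ) : ℂ) * γ = lam a - lam b - γ := by push_cast; ring
  have e3 : lam a - lam b + (((n - 1 : ℤ) : ℂ) - (μ a - μ b)) * γ =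
    lam a - lam b + (n - 1 - (μ a - μ b)) * γ := by push_cast; ring
  have e4 : lam a - lam b + (((2 * n : ℤ) : ℂ) - (μ a - μ b)) * γ =
    lam a - lam b - ((μ a - μ b) - 2 * ((n + 1 : ℕ) : ℂ) + 2) * γ := by push_cast; ring
  rw [e0] at h0
  rw [e1] at h1
  rw [e3] at h3
  rw [e4] at h4
  -- the factors
  have f1 : Nf τ b (fun c => lam c - γ * wn μ a b n c) =
      jtheta τ (lam a - lam b - ((μ a - μ b) - 2 * ((n + 1 : ℕ) : ℂ) + 2) * γ) *
        Mf τ a b (fun c => shn γ b n lam c - γ * μ c) := by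
    rw [Nf_eq τ hab, Mf_congr τ hne (lam' := fun c => shn γ b n lam c - γ * μ c)
      (fun c hc => by simp only [shn, wn, if_neg hc]; ring)]
    congr 2
    simp only [wn, if_neg hne, if_neg hne.symm, if_true]; push_cast; ring
  have f2 : Nf τ a (shn γ b n lam) = Nf τ a lam :=
    Nf_congr τ fun c hc => by
      have : c ≠ b := ne_of_lt (lt_of_le_of_lt hc hab)
      simp [shn, this]
  have f3 : Nf τ a (fun c => shn γ b n lam c - γ * μ c) = Nf τ a (fun c => lam c - γ * μ c) :=
    Nf_congr τ fun c hc => by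
      have : c ≠ b := ne_of_lt (lt_of_le_of_lt hc hab)
      simp [shn, this]
  have f4 : Nf τ b (shn γ a 1 (shn γ b n lam)) =
      jtheta τ (lam a - lam b + (n - 1) * γ) * Mf τ a b (shn γ b n lam) := by
    rw [Nf_eq τ hab, Mf_congr τ hne (lam' := shn γ b n lam)
      (fun c hc => by simp [shn, hc])]
    congr 2
    simp only [shn, if_neg hne, if_neg hne.symm, if_true]; push_cast; ring
  have f5 : Nf τ b (fun c => shn γ a 1 (shn γ b n lam) c - γ * μ c) =
      jtheta τ (lam a - lam b + (n - 1 - (μ a - μ b)) * γ) *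
        Mf τ a b (fun c => shn γ b n lam c - γ * μ c) := by
    rw [Nf_eq τ hab, Mf_congr τ hne (lam' := fun c => shn γ b n lam c - γ * μ c)
      (fun c hc => by simp [shn, hc])]
    congr 2
    simp only [shn, if_neg hne, if_neg hne.symm, if_true]; push_cast; ring
  rw [f2, f3, f4, f5] at RHS
  rw [LHS, CC, Nat.add_sub_cancel, hiter n]
  dsimp only
  rw [RHS, f1, Qf_rel τ γ μ hab]
  simp only [smul_smul]
  congr 1
  have g1 : ((μ a - μ b) - ((n + 1 : ℕ) : ℂ) + 1) * γ = ((μ a - μ b) - n) * γ := by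
    push_cast; ring
  have g2 : ((n + 1 : ℕ) : ℂ) * γ = ((n : ℂ) + 1) * γ := by push_cast; ring
  rw [g1, g2]
  simp only [mul_inv, div_eq_mul_inv]
  have c1 := mul_inv_cancel₀ h1
  linear_combination (
    -(Nf τ a lam) * (jtheta τ (lam a - lam b -
      ((μ a - μ b) - 2 * ((n + 1 : ℕ) : ℂ) + 2) * γ))⁻¹ *
    (Mf τ a b (fun c => shn γ b n lam c - γ * μ c))⁻¹ * Mf τ a b (shn γ b n lam) *
    (Nf τ a (fun c => lam c - γ * μ c))⁻¹ * Qf τ γ μ a b n lam *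
    (jtheta τ (((μ a - μ b) - n) * γ) * jtheta τ (((n : ℂ) + 1) * γ)) *
    jtheta τ (lam a - lam b + (n - 1) * γ) * (jtheta τ (lam a - lam b))⁻¹ *
    (jtheta τ (lam a - lam b + (n - 1 - (μ a - μ b)) * γ))⁻¹) * c1
end
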